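/- Let R be a right artinian ring and M a finitely generated right R-module. Then φ(M) ≤ φ(ΩM) + 1, where Ω denotes the syzygy. -/

import Mathlib

open Module Function

universe u

variable (R : Type u) [Ring R]

/-- A finitely generated right `R`-module, encoded as a module over `Rᵐᵒᵖ`. -/
structure FGMod where
  carrier : Type u
  [isAddCommGroup : AddCommGroup carrier]
  [isModule : Module Rᵐᵒᵖ carrier]
  [isFinite : Module.Finite Rᵐᵒᵖ carrier]

attribute [instance] FGMod.isAddCommGroup FGMod.isModule FGMod.isFinite

instance : CoeSort (FGMod R) (Type u) := ⟨FGMod.carrier⟩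

variable {R}

/-- Isomorphism of f.g. right modules. -/
def FGMod.Iso (M N : FGMod R) : Prop := Nonempty (M ≃ₗ[Rᵐᵒᵖ] N)

/-- Direct sum. -/
def FGMod.prod (M N : FGMod R) : FGMod R := ⟨M × N⟩

/-- `M^k`, the direct sum of `k` copies of `M`. -/
def FGMod.pow (M : FGMod R) (k : ℕ) : FGMod R := ⟨Fin k → M⟩

/-- `N` is (isomorphic to) a direct summand of `M`. -/
def FGMod.IsSummand (N M : FGMod R) : Prop :=
  ∃ A B : Submodule Rᵐᵒᵖ M, IsCompl A B ∧ Nonempty (N ≃ₗ[Rᵐᵒᵖ] A)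

/-- `M` is indecomposable. -/
def FGMod.Indec (M : FGMod R) : Prop :=
  Nontrivial M ∧ ∀ A B : Submodule Rᵐᵒᵖ M, IsCompl A B → A = ⊥ ∨ B = ⊥

/-- `M` is projective. -/
def FGMod.Proj (M : FGMod R) : Prop := Module.Projective Rᵐᵒᵖ M

/-- `f : P → M` is a projective cover: `P` projective, `f` surjective with superfluous kernel. -/
def IsProjCover (M P : FGMod R) (f : P →ₗ[Rᵐᵒᵖ] M) : Prop :=
  P.Proj ∧ Surjective f ∧ ∀ N : Submodule Rᵐᵒᵖ P, N ⊔ LinearMap.ker f = ⊤ → N = ⊤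

/-- `N` is a (first) syzygy of `M`: the kernel of a projective cover of `M`. -/
def IsSyzygy (M N : FGMod R) : Prop :=
  ∃ (P : FGMod R) (f : P →ₗ[Rᵐᵒᵖ] M),
    IsProjCover M P f ∧ Nonempty (N ≃ₗ[Rᵐᵒᵖ] LinearMap.ker f)

/-- `N` is an `n`-th syzygy of `M`. -/
def IsSyzygyN : ℕ → FGMod R → FGMod R → Prop
  | 0, M, N => M.Iso N
  | n+1, M, N => ∃ L, IsSyzygy M L ∧ IsSyzygyN n L N

/-- `M` has projective dimension at most `n`. -/
def HasPdLE : ℕ → FGMod R → Prop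
  | 0, M => M.Proj
  | n+1, M => M.Proj ∨ ∃ N, IsSyzygy M N ∧ HasPdLE n N

/-- `M` has finite projective dimension. -/
def FinPd (M : FGMod R) : Prop := ∃ n, HasPdLE n M

/-- The projective dimension of `M` (junk value if infinite). -/
noncomputable def pdIT (M : FGMod R) : ℕ := sInf {n | HasPdLE n M}

variable (R)

/-- The Igusa–Todorov relations in the free abelian group on f.g. right modules:
`[A] - [B] - [C]` whenever `A ≅ B ⊕ C`, and `[P]` for `P` projective. -/
def ITRel : Set (FreeAbelianGroup (FGMod R)) :=
  {x | ∃ A B C : FGMod R, Nonempty (A ≃ₗ[Rᵐᵒᵖ] (B × C : Type u)) ∧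
        x = FreeAbelianGroup.of A - FreeAbelianGroup.of B - FreeAbelianGroup.of C} ∪
  {x | ∃ P : FGMod R, P.Proj ∧ x = FreeAbelianGroup.of P}

/-- The Igusa–Todorov group `K`. -/
def ITK := FreeAbelianGroup (FGMod R) ⧸ AddSubgroup.closure (ITRel R)

noncomputable instance : AddCommGroup (ITK R) :=
  QuotientAddGroup.Quotient.addCommGroup _

/-- The class `[M]` in `K`. -/
noncomputable def ITcls (M : FGMod R) : ITK R := QuotientAddGroup.mk (FreeAbelianGroup.of M)

/-- `⟨M⟩`: the subgroup of `K` generated by the indecomposable non-projective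
direct summands of `M`. -/
noncomputable def ITgen (M : FGMod R) : AddSubgroup (ITK R) :=
  AddSubgroup.closure
    {x | ∃ N : FGMod R, N.IsSummand M ∧ N.Indec ∧ ¬N.Proj ∧ x = ITcls R N}

/-- The rank of a subgroup of `K`. -/
noncomputable def rkIT (H : AddSubgroup (ITK R)) : ℕ :=
  Module.finrank ℤ (AddSubgroup.toIntSubmodule H)

/-- `OmK` is a syzygy endomorphism of `K`: a group endomorphism sending `[M]` to `[ΩM]`. -/
def IsSyzygyEnd (OmK : AddMonoid.End (ITK R)) : Prop :=
  ∀ M N : FGMod R, IsSyzygy M N → OmK (ITcls R M) = ITcls R N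

/-- The Igusa–Todorov function `φ`: the least `n` such that the rank of
`Ω^i⟨M⟩` equals that of `Ω^n⟨M⟩` for all `i ≥ n`. -/
noncomputable def phiIT (OmK : AddMonoid.End (ITK R)) (M : FGMod R) : ℕ :=
  sInf {n | ∀ i, n ≤ i →
    rkIT R ((ITgen R M).map ((OmK ^ i : AddMonoid.End (ITK R)) : ITK R →+ ITK R))
      = rkIT R ((ITgen R M).map ((OmK ^ n : AddMonoid.End (ITK R)) : ITK R →+ ITK R))}

/-- The second Igusa–Todorov function `ψ`. -/
noncomputable def psiIT (OmK : AddMonoid.End (ITK R)) (M : FGMod R) : ℕ :=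
  phiIT R OmK M + sSup {d | ∃ N X : FGMod R, IsSyzygyN (phiIT R OmK M) M N ∧
      X.IsSummand N ∧ FinPd X ∧ d = pdIT X}

/-- The socle of a module: the sum of its simple submodules. -/
def socleIT (M : FGMod R) : Submodule Rᵐᵒᵖ M :=
  sSup {S : Submodule Rᵐᵒᵖ M | IsSimpleModule Rᵐᵒᵖ S}



section ITaux

variable {R : Type u} [Ring R]

/-- `X` is a retract of `M`. -/
def FGMod.Rt (X M : FGMod R) : Prop :=
  ∃ (i : X →ₗ[Rᵐᵒᵖ] M) (p : M →ₗ[Rᵐᵒᵖ] X), ∀ x, p (i x) = x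

theorem FGMod.Rt.trans {X Y Z : FGMod R} (h : X.Rt Y) (h' : Y.Rt Z) : X.Rt Z := by
  obtain ⟨i, p, h⟩ := h
  obtain ⟨j, q, h'⟩ := h'
  exact ⟨j ∘ₗ i, p ∘ₗ q, fun x => by simp [h, h']⟩

theorem FGMod.rt_of_isSummand {X M : FGMod R} (h : X.IsSummand M) : X.Rt M := by
  obtain ⟨A, B, hAB, ⟨e⟩⟩ := h
  refine ⟨A.subtype ∘ₗ e.toLinearMap, e.symm.toLinearMap ∘ₗ A.projectionOnto B hAB, fun x => ?_⟩
  simp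

theorem FGMod.isSummand_of_rt {X M : FGMod R} (h : X.Rt M) : X.IsSummand M := by
  obtain ⟨i, p, h⟩ := h
  have hi : Injective i := LeftInverse.injective h
  refine ⟨LinearMap.range i, LinearMap.ker (i.rangeRestrict ∘ₗ p), LinearMap.isCompl_of_proj ?_,
    ⟨LinearEquiv.ofInjective i hi⟩⟩
  rintro ⟨_, x, rfl⟩
  ext
  simp [h]

theorem end_dichotomy [IsArtinianRing Rᵐᵒᵖ] {X : FGMod R} (hX : X.Indec)
    (u v : Module.End Rᵐᵒᵖ X) (huv : u + v = 1) : IsUnit u ∨ IsUnit v := by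
  obtain ⟨n, hn⟩ := (LinearMap.eventually_isCompl_ker_pow_range_pow u).exists_forall_of_atTop
  have hc := hn (n+1) (by omega)
  rcases hX.2 _ _ hc with h | h
  · left
    rw [Module.End.isUnit_iff]
    apply IsArtinian.bijective_of_injective_endomorphism
    have h2 : Injective (u ^ (n+1)) := LinearMap.ker_eq_bot.1 h
    intro x y hxy
    apply h2
    rw [pow_succ, Module.End.mul_apply, Module.End.mul_apply, hxy]
  · right
    have h2 : u ^ (n+1) = 0 := LinearMap.range_eq_bot.1 h
    have : v = 1 - u := by rw [← huv]; abel
    rw [this]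
    exact IsNilpotent.isUnit_one_sub ⟨_, h2⟩

theorem rt_of_isUnit {X A : FGMod R} (i : X →ₗ[Rᵐᵒᵖ] A) (p : A →ₗ[Rᵐᵒᵖ] X)
    (h : Bijective (p ∘ₗ i)) : X.Rt A := by
  refine ⟨i, (LinearEquiv.ofBijective _ h).symm.toLinearMap ∘ₗ p, fun x => ?_⟩
  exact (LinearEquiv.ofBijective _ h).symm_apply_apply x

theorem rt_prod [IsArtinianRing Rᵐᵒᵖ] {X M A B : FGMod R} (hX : X.Indec) (e : M ≃ₗ[Rᵐᵒᵖ] (A × B))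
    (h : X.Rt M) : X.Rt A ∨ X.Rt B := by
  obtain ⟨i, p, h⟩ := h
  let i1 : X →ₗ[Rᵐᵒᵖ] A := LinearMap.fst _ _ _ ∘ₗ e.toLinearMap ∘ₗ i
  let i2 : X →ₗ[Rᵐᵒᵖ] B := LinearMap.snd _ _ _ ∘ₗ e.toLinearMap ∘ₗ i
  let p1 : A →ₗ[Rᵐᵒᵖ] X := p ∘ₗ e.symm.toLinearMap ∘ₗ LinearMap.inl _ _ _
  let p2 : B →ₗ[Rᵐᵒᵖ] X := p ∘ₗ e.symm.toLinearMap ∘ₗ LinearMap.inr _ _ _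
  have huv : (p1 ∘ₗ i1 : Module.End Rᵐᵒᵖ X) + (p2 ∘ₗ i2 : Module.End Rᵐᵒᵖ X) = 1 := by
    ext x
    simp only [p1, p2, i1, i2, LinearMap.add_apply, LinearMap.comp_apply, LinearMap.inl_apply,
      LinearMap.inr_apply, LinearMap.fst_apply, LinearMap.snd_apply, Module.End.one_apply,
      LinearEquiv.coe_coe, ← map_add]
    simp [h]
  rcases end_dichotomy hX _ _ huv with h | h
  · exact Or.inl (rt_of_isUnit i1 p1 ((Module.End.isUnit_iff _).1 h))
  · exact Or.inr (rt_of_isUnit i2 p2 ((Module.End.isUnit_iff _).1 h))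

theorem len_lt_of_lt [IsArtinianRing Rᵐᵒᵖ] {M : FGMod R} {A : Submodule Rᵐᵒᵖ M} (h : A ≠ ⊤) :
    (Module.length Rᵐᵒᵖ A).toNat < (Module.length Rᵐᵒᵖ M).toNat := by
  have h1 := Submodule.length_lt h
  have h2 : Module.length Rᵐᵒᵖ M ≠ ⊤ := Module.length_ne_top
  rw [← ENat.natCast_toNat h2, ← ENat.natCast_toNat (ne_top_of_lt h1)] at h1
  exact_mod_cast h1

theorem fg_induction [IsArtinianRing Rᵐᵒᵖ] (P : FGMod R → Prop)
    (h0 : ∀ M : FGMod R, Subsingleton M → P M)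
    (h1 : ∀ M : FGMod R, M.Indec → P M)
    (h2 : ∀ M A B : FGMod R, Nonempty (M ≃ₗ[Rᵐᵒᵖ] (A × B : Type u)) → P A → P B → P M)
    (M : FGMod R) : P M := by
  induction hn : (Module.length Rᵐᵒᵖ M).toNat using Nat.strong_induction_on generalizing M with
  | _ n ih =>
    rcases subsingleton_or_nontrivial M with h | hnt
    · exact h0 M h
    by_cases hM : M.Indec
    · exact h1 M hM
    have : ∃ A B : Submodule Rᵐᵒᵖ M, IsCompl A B ∧ A ≠ ⊥ ∧ B ≠ ⊥ := by
      by_contra hcon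
      push Not at hcon
      refine hM ⟨hnt, fun A B hAB => ?_⟩
      by_cases hA : A = ⊥
      · exact Or.inl hA
      · exact Or.inr (hcon A B hAB hA)
    obtain ⟨A, B, hAB, hA, hB⟩ := this
    have hA' : A ≠ ⊤ := fun h => hB (by have := hAB.inf_eq_bot; simpa [h] using this)
    have hB' : B ≠ ⊤ := fun h => hA (by have := hAB.inf_eq_bot; simpa [h] using this)
    refine h2 M ⟨A⟩ ⟨B⟩ ⟨(Submodule.prodEquivOfIsCompl A B hAB).symm⟩ ?_ ?_
    · exact ih _ (by rw [← hn]; exact len_lt_of_lt hA') ⟨A⟩ rfl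
    · exact ih _ (by rw [← hn]; exact len_lt_of_lt hB') ⟨B⟩ rfl

theorem cls_prod {M A B : FGMod R} (h : Nonempty (M ≃ₗ[Rᵐᵒᵖ] (A × B : Type u))) :
    ITcls R M = ITcls R A + ITcls R B := by
  have h3 : (QuotientAddGroup.mk (FreeAbelianGroup.of M - FreeAbelianGroup.of A
      - FreeAbelianGroup.of B) : FreeAbelianGroup (FGMod R) ⧸ AddSubgroup.closure (ITRel R)) = 0 :=
    (QuotientAddGroup.eq_zero_iff _).2
      (AddSubgroup.subset_closure (Or.inl ⟨M, A, B, h, rfl⟩))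
  have h4 : ITcls R M - ITcls R A - ITcls R B = 0 := h3
  rw [sub_sub, sub_eq_zero] at h4
  exact h4

theorem cls_proj {P : FGMod R} (h : P.Proj) : ITcls R P = 0 :=
  (QuotientAddGroup.eq_zero_iff _).2 (AddSubgroup.subset_closure (Or.inr ⟨P, h, rfl⟩))

theorem proj_of_subsingleton {P : FGMod R} (h : Subsingleton P) : P.Proj := by
  unfold FGMod.Proj
  infer_instance

theorem cls_iso {M A : FGMod R} (e : M ≃ₗ[Rᵐᵒᵖ] A) : ITcls R M = ITcls R A := by
  have := cls_prod (M := M) (A := A) (B := ⟨PUnit⟩) ⟨e ≪≫ₗ (LinearEquiv.prodUnique).symm⟩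
  rw [this, cls_proj (P := ⟨PUnit⟩) (proj_of_subsingleton (inferInstanceAs (Subsingleton PUnit))),
    add_zero]

theorem rt_left {M A B : FGMod R} (e : M ≃ₗ[Rᵐᵒᵖ] (A × B : Type u)) : A.Rt M :=
  ⟨e.symm.toLinearMap ∘ₗ LinearMap.inl _ _ _, LinearMap.fst _ _ _ ∘ₗ e.toLinearMap,
    fun x => by simp⟩

theorem rt_right {M A B : FGMod R} (e : M ≃ₗ[Rᵐᵒᵖ] (A × B : Type u)) : B.Rt M :=
  ⟨e.symm.toLinearMap ∘ₗ LinearMap.inr _ _ _, LinearMap.snd _ _ _ ∘ₗ e.toLinearMap,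
    fun x => by simp⟩

theorem cls_mem_gen [IsArtinianRing Rᵐᵒᵖ] (N : FGMod R) (Y : FGMod R) :
    Y.Rt N → ITcls R Y ∈ ITgen R N := by
  refine fg_induction (fun Y => Y.Rt N → ITcls R Y ∈ ITgen R N) ?_ ?_ ?_ Y
  · intro M hM _
    rw [cls_proj (proj_of_subsingleton hM)]
    exact zero_mem _
  · intro M hM h
    by_cases hp : M.Proj
    · rw [cls_proj hp]; exact zero_mem _
    · exact AddSubgroup.subset_closure ⟨M, FGMod.isSummand_of_rt h, hM, hp, rfl⟩
  · rintro M A B ⟨e⟩ hA hB h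
    rw [cls_prod ⟨e⟩]
    exact add_mem (hA ((rt_left e).trans h)) (hB ((rt_right e).trans h))

theorem finite_cls [IsArtinianRing Rᵐᵒᵖ] (M : FGMod R) :
    ∃ S : Set (ITK R), S.Finite ∧ ∀ X : FGMod R, X.Indec → X.Rt M → ITcls R X ∈ S := by
  refine fg_induction (fun M => ∃ S : Set (ITK R), S.Finite ∧
    ∀ X : FGMod R, X.Indec → X.Rt M → ITcls R X ∈ S) ?_ ?_ ?_ M
  · intro M hM
    refine ⟨∅, Set.finite_empty, fun X hX h => ?_⟩
    obtain ⟨i, p, h⟩ := h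
    have hs : Subsingleton X := (LeftInverse.injective h).subsingleton
    exact absurd hX.1 (not_nontrivial_iff_subsingleton.2 hs)
  · intro M hM
    refine ⟨{ITcls R M}, Set.finite_singleton _, fun X hX h => ?_⟩
    obtain ⟨A, B, hAB, ⟨e⟩⟩ := FGMod.isSummand_of_rt h
    have hB : B = ⊥ := by
      rcases hM.2 A B hAB with hA | hB
      · subst hA
        have hs : Subsingleton X := e.injective.subsingleton
        exact absurd hX.1 (not_nontrivial_iff_subsingleton.2 hs)
      · exact hB
    have hA : A = ⊤ := by have := hAB.sup_eq_top; simpa [hB] using this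
    exact cls_iso (e ≪≫ₗ LinearEquiv.ofTop A hA)
  · rintro M A B ⟨e⟩ ⟨S, hS, hS'⟩ ⟨T, hT, hT'⟩
    refine ⟨S ∪ T, hS.union hT, fun X hX h => ?_⟩
    rcases rt_prod hX e h with h | h
    · exact Or.inl (hS' X hX h)
    · exact Or.inr (hT' X hX h)

theorem gen_fg [IsArtinianRing Rᵐᵒᵖ] (M : FGMod R) : (ITgen R M).FG := by
  obtain ⟨S, hS, h⟩ := finite_cls M
  rw [AddSubgroup.fg_iff]
  refine ⟨_, rfl, hS.subset ?_⟩
  rintro x ⟨X, hX, hi, -, rfl⟩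
  exact h X hi (FGMod.rt_of_isSummand hX)

theorem exists_cover [IsArtinianRing Rᵐᵒᵖ] (X : FGMod R) :
    ∃ (P : FGMod R) (f : P →ₗ[Rᵐᵒᵖ] X), IsProjCover X P f := by
  have hex : ∃ n, ∃ (P : FGMod R) (f : P →ₗ[Rᵐᵒᵖ] X), P.Proj ∧ Surjective f ∧
      (Module.length Rᵐᵒᵖ P).toNat = n := by
    obtain ⟨n, f, hf⟩ := Module.Finite.exists_fin' Rᵐᵒᵖ X
    exact ⟨_, ⟨Fin n → Rᵐᵒᵖ⟩, f, (inferInstanceAs (Module.Projective Rᵐᵒᵖ (Fin n → Rᵐᵒᵖ))),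
      hf, rfl⟩
  classical
  obtain ⟨P, f, hP, hf, hl⟩ := Nat.find_spec hex
  refine ⟨P, f, hP, hf, fun N hN => ?_⟩
  have : Module.Projective Rᵐᵒᵖ P := hP
  have hs : Surjective (f ∘ₗ N.subtype) := by
    intro x
    obtain ⟨y, rfl⟩ := hf x
    have hy : y ∈ N ⊔ LinearMap.ker f := by rw [hN]; trivial
    obtain ⟨a, ha, b, hb, rfl⟩ := Submodule.mem_sup.1 hy
    exact ⟨⟨a, ha⟩, by simp [LinearMap.mem_ker.1 hb]⟩
  obtain ⟨g, hg⟩ := Module.projective_lifting_property (f ∘ₗ N.subtype) f hs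
  let h : Module.End Rᵐᵒᵖ P := N.subtype ∘ₗ g
  have hh : ∀ x, f (h x) = f x := fun x => LinearMap.congr_fun hg x
  have hpow : ∀ n x, f ((h ^ n) x) = f x := by
    intro n
    induction n with
    | zero => intro x; simp
    | succ n ih => intro x; rw [pow_succ, Module.End.mul_apply, ih, hh]
  obtain ⟨n, hn⟩ := (LinearMap.eventually_isCompl_ker_pow_range_pow h).exists_forall_of_atTop
  have hc := hn (n+1) (by omega)
  have htop : LinearMap.range (h ^ (n+1)) = ⊤ := by
    by_contra hne
    have hlt := len_lt_of_lt hne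
    rw [hl] at hlt
    refine Nat.find_min hex hlt ⟨⟨LinearMap.range (h ^ (n+1))⟩,
      f ∘ₗ (LinearMap.range (h ^ (n+1))).subtype, ?_, ?_, rfl⟩
    · exact Module.Projective.of_split (LinearMap.range (h ^ (n+1))).subtype
        (Submodule.projectionOnto _ _ hc.symm) (by ext x; simp)
    · intro x
      obtain ⟨y, rfl⟩ := hf x
      exact ⟨⟨_, y, rfl⟩, hpow (n + 1) y⟩
  rw [eq_top_iff, ← htop, pow_succ']
  rintro _ ⟨x, rfl⟩
  exact (g ((h ^ n) x)).2

theorem syzygy_rt [IsArtinianRing Rᵐᵒᵖ] {X M N : FGMod R} (hX : X.Rt M) (hN : IsSyzygy M N) :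
    ∃ Y : FGMod R, IsSyzygy X Y ∧ Y.Rt N := by
  obtain ⟨i, p, hip⟩ := hX
  obtain ⟨P, f, ⟨hP, hf, -⟩, ⟨e⟩⟩ := hN
  obtain ⟨Q, q, hQ, hq, hsm⟩ := exists_cover X
  have : Module.Projective Rᵐᵒᵖ P := hP
  have : Module.Projective Rᵐᵒᵖ Q := hQ
  obtain ⟨a, ha⟩ := Module.projective_lifting_property f (i ∘ₗ q) hf
  obtain ⟨b, hb⟩ := Module.projective_lifting_property q (p ∘ₗ f) hq
  have ha' : ∀ x, f (a x) = i (q x) := fun x => LinearMap.congr_fun ha x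
  have hb' : ∀ x, q (b x) = p (f x) := fun x => LinearMap.congr_fun hb x
  have hba : ∀ x, q (b (a x)) = q x := fun x => by rw [hb', ha', hip]
  have hsurj : Surjective (b ∘ₗ a) := by
    rw [← LinearMap.range_eq_top]
    apply hsm
    rw [eq_top_iff]
    intro x _
    refine Submodule.mem_sup.2 ⟨b (a x), ⟨x, rfl⟩, x - b (a x), ?_, by abel⟩
    simp [hba]
  have hinj : Injective (b ∘ₗ a) := IsNoetherian.injective_of_surjective_endomorphism _ hsurj
  let a' : LinearMap.ker q →ₗ[Rᵐᵒᵖ] LinearMap.ker f := a.restrict (fun x hx => by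
    simp only [LinearMap.mem_ker] at hx ⊢
    simp [ha', hx])
  let b' : LinearMap.ker f →ₗ[Rᵐᵒᵖ] LinearMap.ker q := b.restrict (fun x hx => by
    simp only [LinearMap.mem_ker] at hx ⊢
    simp [hb', hx])
  refine ⟨⟨LinearMap.ker q⟩, ⟨Q, q, ⟨hQ, hq, hsm⟩, ⟨LinearEquiv.refl _ _⟩⟩, ?_⟩
  refine rt_of_isUnit (X := ⟨LinearMap.ker q⟩) (e.symm.toLinearMap ∘ₗ a') (b' ∘ₗ e.toLinearMap) ?_
  apply IsArtinian.bijective_of_injective_endomorphism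
  intro x y hxy
  have h1 : b' (a' x) = b' (a' y) := by simpa using hxy
  exact Subtype.ext (hinj (congrArg Subtype.val h1))

theorem map_gen_le [IsArtinianRing Rᵐᵒᵖ] (OmK : AddMonoid.End (ITK R)) (hOm : IsSyzygyEnd R OmK)
    (M N : FGMod R) (hN : IsSyzygy M N) :
    (ITgen R M).map (OmK : ITK R →+ ITK R) ≤ ITgen R N := by
  refine AddSubgroup.map_le_iff_le_comap.2 ?_
  rw [ITgen, AddSubgroup.closure_le]
  rintro x ⟨X, hX, -, -, rfl⟩
  obtain ⟨Y, hY, hYN⟩ := syzygy_rt (FGMod.rt_of_isSummand hX) hN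
  change OmK (ITcls R X) ∈ ITgen R N
  rw [hOm X Y hY]
  exact cls_mem_gen N Y hYN

end ITaux

section rank

variable {G : Type*} [AddCommGroup G]

theorem zrank_map_add (A : Submodule ℤ G) (hA : A.FG) (g : G →ₗ[ℤ] G) :
    finrank ℤ (A.map g) + finrank ℤ (LinearMap.ker (g.domRestrict A)) = finrank ℤ A := by
  have : Module.Finite ℤ A := Module.Finite.iff_fg.2 hA
  rw [← LinearMap.range_domRestrict]
  have h := Submodule.finrank_quotient_add_finrank (LinearMap.ker (g.domRestrict A))
  rw [← h, (g.domRestrict A).quotKerEquivRange.finrank_eq]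

theorem zrank_map_eq (A B : Submodule ℤ G) (hB : B.FG) (hAB : A ≤ B) (g : G →ₗ[ℤ] G)
    (h : finrank ℤ (B.map g) = finrank ℤ B) : finrank ℤ (A.map g) = finrank ℤ A := by
  have hfB : Module.Finite ℤ B := Module.Finite.iff_fg.2 hB
  have hfA : Module.Finite ℤ A := Module.Finite.of_injective (Submodule.inclusion hAB)
    (Submodule.inclusion_injective hAB)
  have hA : A.FG := Module.Finite.iff_fg.1 hfA
  have h1 := zrank_map_add B hB g
  have h2 := zrank_map_add A hA g
  let j : LinearMap.ker (g.domRestrict A) →ₗ[ℤ] LinearMap.ker (g.domRestrict B) :=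
    (Submodule.inclusion hAB).restrict (fun x hx => hx)
  have hj : Injective j := fun x y hxy => by
    have := congrArg (fun z : LinearMap.ker (g.domRestrict B) => ((z : B) : G)) hxy
    exact Subtype.ext (Subtype.ext this)
  have h3 := LinearMap.finrank_le_finrank_of_injective hj
  omega

end rank

section final

variable {R : Type u} [Ring R]

theorem fg_map {H : AddSubgroup (ITK R)} (hH : H.FG) (g : ITK R →+ ITK R) : (H.map g).FG := by
  rw [AddSubgroup.fg_iff] at hH ⊢
  obtain ⟨S, rfl, hS⟩ := hH
  exact ⟨Set.image g S, (AddMonoidHom.map_closure g S).symm, hS.image _⟩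

theorem rk_map_le (H : AddSubgroup (ITK R)) (hH : H.FG) (g : ITK R →+ ITK R) :
    rkIT R (H.map g) ≤ rkIT R H := by
  have h := zrank_map_add (AddSubgroup.toIntSubmodule H)
    ((Submodule.fg_iff_addSubgroup_fg _).2 hH) g.toIntLinearMap
  exact le_of_add_le_left h.le

theorem rk_map_eq (A B : AddSubgroup (ITK R)) (hB : B.FG) (hAB : A ≤ B) (g : ITK R →+ ITK R)
    (h : rkIT R (B.map g) = rkIT R B) : rkIT R (A.map g) = rkIT R A :=
  zrank_map_eq (AddSubgroup.toIntSubmodule A) (AddSubgroup.toIntSubmodule B)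
    ((Submodule.fg_iff_addSubgroup_fg _).2 hB) hAB g.toIntLinearMap h

theorem map_pow_add (OmK : AddMonoid.End (ITK R)) (H : AddSubgroup (ITK R)) (m n : ℕ) :
    H.map ((OmK ^ (m + n) : AddMonoid.End (ITK R)) : ITK R →+ ITK R)
      = (H.map ((OmK ^ n : AddMonoid.End (ITK R)) : ITK R →+ ITK R)).map
        ((OmK ^ m : AddMonoid.End (ITK R)) : ITK R →+ ITK R) := by
  rw [pow_add]
  exact (AddSubgroup.map_map H _ _).symm

theorem phi_nonempty (OmK : AddMonoid.End (ITK R)) (H : AddSubgroup (ITK R)) (hH : H.FG) :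
    {n | ∀ i, n ≤ i →
    rkIT R (H.map ((OmK ^ i : AddMonoid.End (ITK R)) : ITK R →+ ITK R))
      = rkIT R (H.map ((OmK ^ n : AddMonoid.End (ITK R)) : ITK R →+ ITK R))}.Nonempty := by
  let r : ℕ → ℕ := fun i => rkIT R (H.map ((OmK ^ i : AddMonoid.End (ITK R)) : ITK R →+ ITK R))
  have hr : Antitone r := by
    intro a b hab
    obtain ⟨c, rfl⟩ := Nat.exists_eq_add_of_le' hab
    simp only [r]
    rw [map_pow_add]
    exact rk_map_le _ (fg_map hH _) _
  exact ⟨argmin r, fun i hi => le_antisymm (hr hi) (argmin_le r i)⟩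

end final

/-- `φ(M) ≤ φ(ΩM) + 1`. -/
theorem phi_le_phi_syzygy_add_one (R : Type u) [Ring R] [IsArtinianRing Rᵐᵒᵖ]
    (OmK : AddMonoid.End (ITK R)) (hOm : IsSyzygyEnd R OmK)
    (M N : FGMod R) (hN : IsSyzygy M N) :
    phiIT R OmK M ≤ phiIT R OmK N + 1 := by
  have hmem := Nat.sInf_mem (phi_nonempty OmK (ITgen R N) (gen_fg N))
  change phiIT R OmK N ∈ _ at hmem
  generalize phiIT R OmK N = n at hmem
  apply Nat.sInf_le
  intro i hi
  obtain ⟨c, rfl⟩ := Nat.exists_eq_add_of_le' hi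
  have hle := map_gen_le OmK hOm M N hN
  rw [map_pow_add OmK _ c (n + 1)]
  refine rk_map_eq _ ((ITgen R N).map ((OmK ^ n : AddMonoid.End (ITK R)) : ITK R →+ ITK R))
    (fg_map (gen_fg N) _) ?_ _ ?_
  · rw [map_pow_add OmK _ n 1, pow_one]
    exact AddSubgroup.map_mono hle
  · rw [← map_pow_add]
    exact hmem _ (by omega)
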